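/- arXiv:1110.3182 — 6 statements merged into one kernel-verified Lean document; each statement's English description precedes it below -/
import Mathlib

section
/- Let n and d be integers with 1 ≤ d < n, and let G be a family of distinct d-element subsets of [n] = {1,…,n} with |G| ≤ min( C(n, d+1), Σ_{j=1}^{n-d} C(2j-1, j) ). Then there exists an injective map φ from G into the (d+1)-element subsets of [n] such that g ⊆ φ(g) for every g ∈ G. -/
/-!
By Hall's theorem it suffices that every family `𝒜` of `d`-sets with `#𝒜` at most the given bound
satisfies `#𝒜 ≤ #(∂⁺ 𝒜)`. Taking complements and writing `k = n - d`, this becomes `#𝒜 ≤ #(∂ 𝒜)` for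
families of `k`-sets with `#𝒜 ≤ ∑_{j=1}^k C(2j-1, j)`, which we prove by induction on `k`.

On fewer than `2k` points this is the local LYM inequality. On more points, Kruskal–Katona allows us
to replace `𝒜` by an initial segment `𝒞` of the colexicographic order. As the bound is at most
`C(2k, k)`, the members of `𝒞` are subsets of the first `2k` points; let `v` be the last of these.
The members of `𝒞` avoiding `v` live on `2k - 1` points, where local LYM applies. They include all
`C(2k-1, k)` of the `k`-subsets of those points as soon as some member of `𝒞` contains `v`, so the
link of `v` in `𝒞` satisfies the bound for `k - 1`, where the induction hypothesis applies. The
shadows of the two parts contribute disjointly to the shadow of `𝒞`.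
-/

open Finset Finset.Colex
open scoped FinsetFamily

section Shadow

variable {α β : Type*} {𝒜 : Finset (Finset α)} {U : Finset α} {r : ℕ}

lemma exists_map_mapEmbedding_subtype_eq (h : ∀ s ∈ 𝒜, s ⊆ U) :
    ∃ ℬ : Finset (Finset U),
      ℬ.map (mapEmbedding (Function.Embedding.subtype (· ∈ U))).toEmbedding = 𝒜 := by
  classical
  refine ⟨𝒜.image (Finset.subtype (· ∈ U)), ?_⟩
  rw [map_eq_image, image_image]
  exact (image_congr fun s hs => subtype_map_of_mem (h s hs)).trans image_id

variable [DecidableEq α] [DecidableEq β]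

lemma shadow_map_mapEmbedding (f : α ↪ β) (𝒜 : Finset (Finset α)) :
    ∂ (𝒜.map (mapEmbedding f).toEmbedding) = (∂ 𝒜).map (mapEmbedding f).toEmbedding := by
  ext t
  simp only [mem_shadow_iff, mem_map, RelEmbedding.coe_toEmbedding, mapEmbedding_apply,
    exists_exists_and_eq_and, ← map_erase]
  grind

lemma card_mul_le_card_shadow_mul_of_subset (h𝒜 : (𝒜 : Set (Finset α)).Sized r)
    (hU : ∀ s ∈ 𝒜, s ⊆ U) : #𝒜 * r ≤ #(∂ 𝒜) * (#U - r + 1) := by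
  obtain ⟨ℬ, rfl⟩ := exists_map_mapEmbedding_subtype_eq hU
  have hℬ : (ℬ : Set (Finset U)).Sized r := fun s hs => by
    simpa using h𝒜 (mem_coe.2 (mem_map_of_mem _ hs))
  simpa [shadow_map_mapEmbedding] using card_mul_le_card_shadow_mul hℬ

lemma card_le_card_shadow_of_card_lt_two_mul (h𝒜 : (𝒜 : Set (Finset α)).Sized r)
    (hU : ∀ s ∈ 𝒜, s ⊆ U) (hr : #U < 2 * r) : #𝒜 ≤ #(∂ 𝒜) := by
  refine Nat.le_of_mul_le_mul_right ?_ (show 0 < r by lia)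
  calc #𝒜 * r ≤ #(∂ 𝒜) * (#U - r + 1) := card_mul_le_card_shadow_mul_of_subset h𝒜 hU
    _ ≤ #(∂ 𝒜) * r := by gcongr; lia

lemma sized_memberSubfamily (h𝒜 : (𝒜 : Set (Finset α)).Sized (r + 1)) (a : α) :
    (𝒜.memberSubfamily a : Set (Finset α)).Sized r := by
  intro s hs
  obtain ⟨hs𝒜, has⟩ := mem_memberSubfamily.1 (mem_coe.1 hs)
  simpa [card_insert_of_notMem has] using h𝒜 hs𝒜

lemma shadow_memberSubfamily_subset (a : α) (𝒜 : Finset (Finset α)) :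
    ∂ (𝒜.memberSubfamily a) ⊆ (∂ 𝒜).memberSubfamily a := by
  intro t ht
  obtain ⟨b, hbt, hb⟩ := mem_shadow_iff_insert_mem.1 ht
  obtain ⟨hb𝒜, hab⟩ := mem_memberSubfamily.1 hb
  rw [insert_comm] at hb𝒜
  rw [mem_memberSubfamily, mem_shadow_iff_insert_mem]
  grind

lemma shadow_nonMemberSubfamily_subset (a : α) (𝒜 : Finset (Finset α)) :
    ∂ (𝒜.nonMemberSubfamily a) ⊆ (∂ 𝒜).nonMemberSubfamily a := by
  intro t ht
  obtain ⟨b, hbt, hb⟩ := mem_shadow_iff_insert_mem.1 ht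
  obtain ⟨hb𝒜, hab⟩ := mem_nonMemberSubfamily.1 hb
  rw [mem_nonMemberSubfamily, mem_shadow_iff_insert_mem]
  grind

lemma card_shadow_memberSubfamily_add_card_shadow_nonMemberSubfamily_le (a : α)
    (𝒜 : Finset (Finset α)) :
    #(∂ (𝒜.memberSubfamily a)) + #(∂ (𝒜.nonMemberSubfamily a)) ≤ #(∂ 𝒜) := by
  rw [← card_memberSubfamily_add_card_nonMemberSubfamily a (∂ 𝒜)]
  gcongr
  · exact shadow_memberSubfamily_subset a 𝒜
  · exact shadow_nonMemberSubfamily_subset a 𝒜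

end Shadow

section InitSeg

variable {α : Type*} [LinearOrder α] {𝒞 : Finset (Finset α)} {L s : Finset α} {v : α} {r m : ℕ}

lemma isInitSeg_powersetCard (hL : IsLowerSet (L : Set α)) : IsInitSeg (powersetCard r L) r := by
  refine ⟨Set.sized_powersetCard _ _, fun s t hs ⟨hts, ht⟩ => mem_powersetCard.2 ⟨?_, ht⟩⟩
  intro x hxt
  by_contra hxL
  have hsx : ∀ b ∈ s, b < x := fun b hb =>
    lt_of_not_ge fun hxb => hxL (hL hxb ((mem_powersetCard.1 hs).1 hb))
  exact (forall_lt_mono hts.le hsx x hxt).false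

lemma subset_powersetCard_of_isInitSeg (h𝒞 : IsInitSeg 𝒞 r) (hL : IsLowerSet (L : Set α))
    (hcard : #𝒞 ≤ (#L).choose r) : 𝒞 ⊆ powersetCard r L := by
  rcases h𝒞.total (isInitSeg_powersetCard hL) with h | h
  · exact h
  · exact (eq_of_subset_of_card_le h (by rwa [card_powersetCard])).ge

/-- If `𝒞` contains a set through `v`, then it already contains all `r`-subsets of `L`. -/
lemma card_memberSubfamily_le_of_isInitSeg (h𝒞 : IsInitSeg 𝒞 r) (hL : IsLowerSet (L : Set α))
    (hv : v ∉ L) : #(𝒞.memberSubfamily v) ≤ #𝒞 - (#L).choose r := by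
  rcases h𝒞.total (isInitSeg_powersetCard hL) with h | h
  · have hempty : 𝒞.memberSubfamily v = ∅ := by
      refine eq_empty_of_forall_notMem fun s hs => hv ?_
      exact (mem_powersetCard.1 (h (mem_memberSubfamily.1 hs).1)).1 (mem_insert_self v s)
    simp [hempty]
  · have hsub : powersetCard r L ⊆ 𝒞.nonMemberSubfamily v := fun s hs =>
      mem_nonMemberSubfamily.2 ⟨h hs, fun hvs => hv ((mem_powersetCard.1 hs).1 hvs)⟩
    have hle := card_le_card hsub
    rw [card_powersetCard] at hle
    have hsplit := card_memberSubfamily_add_card_nonMemberSubfamily v 𝒞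
    lia

lemma isInitSeg_insert (h𝒞 : IsInitSeg 𝒞 r) (hs : #s = r)
    (hmin : ∀ t, #t = r → toColex t < toColex s → t ∈ 𝒞) : IsInitSeg (insert s 𝒞) r := by
  constructor
  · rw [coe_insert]
    exact Set.forall_mem_insert.2 ⟨hs, h𝒞.1⟩
  · rintro t u ht ⟨hut, hu⟩
    rcases mem_insert.1 ht with rfl | ht
    · exact mem_insert_of_mem (hmin u hu hut)
    · exact mem_insert_of_mem (h𝒞.2 ht ⟨hut, hu⟩)

lemma exists_isInitSeg_card_eq [Fintype α] (hm : m ≤ (Fintype.card α).choose r) :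
    ∃ 𝒞 : Finset (Finset α), IsInitSeg 𝒞 r ∧ #𝒞 = m := by
  induction m with
  | zero => exact ⟨∅, isInitSeg_empty, rfl⟩
  | succ m ih =>
    obtain ⟨𝒞, h𝒞, rfl⟩ := ih (by lia)
    have hne : (powersetCard r univ \ 𝒞).Nonempty := by
      apply sdiff_nonempty_of_card_lt_card
      rwa [card_powersetCard, card_univ]
    obtain ⟨s, hs, hmin⟩ := exists_min_image _ toColex hne
    simp only [mem_sdiff, mem_powersetCard_univ] at hs hmin
    refine ⟨insert s 𝒞, isInitSeg_insert h𝒞 hs.1 fun t ht hts => ?_, card_insert_of_notMem hs.2⟩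
    by_contra ht𝒞
    exact hts.not_ge (hmin t ⟨ht, ht𝒞⟩)

end InitSeg

lemma sum_choose_two_mul_sub_one_le (k : ℕ) :
    ∑ j ∈ Icc 1 k, (2 * j - 1).choose j ≤ (2 * k).choose k := by
  induction k with
  | zero => simp
  | succ k ih =>
    calc ∑ j ∈ Icc 1 (k + 1), (2 * j - 1).choose j
        = ∑ j ∈ Icc 1 k, (2 * j - 1).choose j + (2 * k + 1).choose (k + 1) :=
          sum_Icc_succ_top (by lia) _
      _ ≤ (2 * k + 1).choose k + (2 * k + 1).choose (k + 1) := by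
          gcongr
          exact ih.trans (Nat.choose_le_choose k (by lia))
      _ = (2 * (k + 1)).choose (k + 1) := (Nat.choose_succ_succ' _ _).symm

section Fin

variable {n : ℕ} {𝒜 : Finset (Finset (Fin n))}

theorem card_le_card_shadow_of_card_le_sum_choose {k : ℕ}
    (h𝒜 : (𝒜 : Set (Finset (Fin n))).Sized k)
    (hcard : #𝒜 ≤ ∑ j ∈ Icc 1 k, (2 * j - 1).choose j) : #𝒜 ≤ #(∂ 𝒜) := by
  induction k generalizing 𝒜 with
  | zero => exact hcard.trans (by simp)
  | succ k ih =>
    obtain hn | hn := lt_or_ge n (2 * (k + 1))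
    · exact card_le_card_shadow_of_card_lt_two_mul h𝒜 (fun s _ => subset_univ s) (by simpa using hn)
    obtain ⟨𝒞, h𝒞, h𝒞𝒜⟩ := exists_isInitSeg_card_eq h𝒜.card_le
    rw [← h𝒞𝒜] at hcard
    let v : Fin n := ⟨2 * k + 1, by lia⟩
    have hIio : #(Iio v) = 2 * k + 1 := Fin.card_Iio v
    have h𝒞v : 𝒞 ⊆ powersetCard (k + 1) (Iic v) := by
      refine subset_powersetCard_of_isInitSeg h𝒞 (by simpa using isLowerSet_Iic v) ?_
      rw [Fin.card_Iic]
      exact hcard.trans (sum_choose_two_mul_sub_one_le (k + 1))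
    have hmember : #(𝒞.memberSubfamily v) ≤ #(∂ (𝒞.memberSubfamily v)) := by
      refine ih (sized_memberSubfamily h𝒞.1 v) ?_
      have hle := card_memberSubfamily_le_of_isInitSeg (v := v) (L := Iio v) h𝒞
        (by simpa using isLowerSet_Iio v) (by simp)
      rw [hIio] at hle
      rw [sum_Icc_succ_top (by lia), show 2 * (k + 1) - 1 = 2 * k + 1 by lia] at hcard
      lia
    have hnonMember : #(𝒞.nonMemberSubfamily v) ≤ #(∂ (𝒞.nonMemberSubfamily v)) := by
      refine card_le_card_shadow_of_card_lt_two_mul (U := Iio v) (r := k + 1)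
        (h𝒞.1.mono (coe_subset.2 (filter_subset _ _))) (fun s hs x hx => ?_) (by lia)
      obtain ⟨hs𝒞, hvs⟩ := mem_nonMemberSubfamily.1 hs
      have hxv : x ≤ v := mem_Iic.1 ((mem_powersetCard.1 (h𝒞v hs𝒞)).1 hx)
      exact mem_Iio.2 (hxv.lt_of_ne fun h => hvs (h ▸ hx))
    calc #𝒜 = #(𝒞.memberSubfamily v) + #(𝒞.nonMemberSubfamily v) := by
          rw [card_memberSubfamily_add_card_nonMemberSubfamily, h𝒞𝒜]
      _ ≤ #(∂ (𝒞.memberSubfamily v)) + #(∂ (𝒞.nonMemberSubfamily v)) := by gcongr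
      _ ≤ #(∂ 𝒞) := card_shadow_memberSubfamily_add_card_shadow_nonMemberSubfamily_le v 𝒞
      _ ≤ #(∂ 𝒜) := kruskal_katona h𝒜 h𝒞𝒜.le h𝒞

theorem card_le_card_upShadow_of_card_le_sum_choose {d : ℕ}
    (h𝒜 : (𝒜 : Set (Finset (Fin n))).Sized d)
    (hcard : #𝒜 ≤ ∑ j ∈ Icc 1 (n - d), (2 * j - 1).choose j) : #𝒜 ≤ #(∂⁺ 𝒜) := by
  have hcompls : (𝒜ᶜˢ : Set (Finset (Fin n))).Sized (n - d) := by simpa using h𝒜.compls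
  simpa using card_le_card_shadow_of_card_le_sum_choose hcompls (by simpa using hcard)

end Fin

theorem exists_injOn_covBy_of_card_le_card_upShadow {α : Type*} [Fintype α] [DecidableEq α]
    {𝒢 : Finset (Finset α)} (h : ∀ 𝒜 ⊆ 𝒢, #𝒜 ≤ #(∂⁺ 𝒜)) :
    ∃ φ : Finset α → Finset α, Set.InjOn φ 𝒢 ∧ ∀ g ∈ 𝒢, g ⋖ φ g := by
  classical
  have hall : ∀ 𝒮 : Finset 𝒢, #𝒮 ≤ #{t : Finset α | ∃ g ∈ 𝒮, g.1 ⋖ t} := by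
    intro 𝒮
    calc #𝒮 = #(𝒮.map (Function.Embedding.subtype _)) := (card_map _).symm
      _ ≤ #(∂⁺ (𝒮.map (Function.Embedding.subtype _))) := h _ (map_subtype_subset 𝒮)
      _ = #{t : Finset α | ∃ g ∈ 𝒮, g.1 ⋖ t} := by
        congr 1
        ext t
        simp [mem_upShadow_iff, covBy_iff_exists_insert]
  obtain ⟨f, hf, hcov⟩ := (Fintype.all_card_le_filter_rel_iff_exists_injective _).1 hall
  have hextend (g : 𝒢) : Function.extend Subtype.val f id g.1 = f g :=
    Subtype.val_injective.extend_apply f id g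
  refine ⟨Function.extend Subtype.val f id, fun a ha b hb hab => ?_, fun g hg => ?_⟩
  · rw [hextend ⟨a, ha⟩, hextend ⟨b, hb⟩] at hab
    exact congrArg Subtype.val (hf hab)
  · rw [hextend ⟨g, hg⟩]
    exact hcov ⟨g, hg⟩

/-- If `G` is a family of distinct `d`-element subsets of `[n]` with
`|G| ≤ min(C(n,d+1), ∑_{j=1}^{n-d} C(2j-1,j))`, then there is an injective map `φ`
from `G` into the `(d+1)`-element subsets of `[n]` with `g ⊆ φ g` for all `g ∈ G`. -/
theorem stmt_0 (n d : ℕ) (hd : 1 ≤ d) (hdn : d < n)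
    (G : Finset (Finset (Fin n))) (hG : ∀ g ∈ G, g.card = d)
    (hcard : G.card ≤ min (Nat.choose n (d + 1))
      (∑ j ∈ Finset.Icc 1 (n - d), Nat.choose (2 * j - 1) j)) :
    ∃ φ : Finset (Fin n) → Finset (Fin n),
      Set.InjOn φ ↑G ∧ ∀ g ∈ G, g ⊆ φ g ∧ (φ g).card = d + 1 := by
  have hshadow : ∀ 𝒜 ⊆ G, #𝒜 ≤ #(∂⁺ 𝒜) := fun 𝒜 h𝒜 =>
    card_le_card_upShadow_of_card_le_sum_choose (fun g hg => hG g (h𝒜 hg))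
      ((card_le_card h𝒜).trans (hcard.trans (min_le_right _ _)))
  obtain ⟨φ, hφ, hcov⟩ := exists_injOn_covBy_of_card_le_card_upShadow hshadow
  refine ⟨φ, hφ, fun g hg => ⟨(hcov g hg).le, ?_⟩⟩
  rw [← hG g hg]
  exact (Order.covBy_iff_add_one_eq.1 (hcov g hg).card_finset).symm
end

section
/- Let δ and n be integers with 1 ≤ δ < n, and set ξ_δ := Σ_{j=1}^{δ} C(2j-1, j). Then min(ξ_δ, C(n, δ-1)) equals ξ_δ if n ≥ 2δ, and equals C(n, δ-1) if n ≤ 2δ-1. -/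
/-!
Since `C(·, δ-1)` is monotone, only the boundary values of `n` matter. At `n = 2δ-1`, `C(n, δ-1)`
is the last summand of `ξ_δ`. At `n = 2δ`, the bound `ξ_δ ≤ C(2δ, δ-1)` is an induction on `δ`:
by Pascal's rule, `C(2δ+2, δ)` exceeds `C(2δ+1, δ-1) ≥ C(2δ, δ-1)` by `C(2δ+1, δ)`, which is
the new summand of `ξ_{δ+1}`.
-/

/-- The sum `ξ_k = ∑_{j=1}^k C(2j-1, j)` that the theorem compares with `C(n, k-1)`. The summation
starts at `j = 1`, so the subtraction in `2 * j - 1` never truncates. -/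
def xi (k : ℕ) : ℕ :=
  ∑ j ∈ Finset.Icc 1 k, Nat.choose (2 * j - 1) j

theorem xi_succ (k : ℕ) : xi (k + 1) = xi k + (2 * k + 1).choose k := by
  rw [xi, Finset.sum_Icc_succ_top (Nat.le_add_left 1 k), ← xi]
  exact congrArg (xi k + ·) (Nat.choose_symm_half k)

theorem xi_succ_le_choose_two_mul_add_two (k : ℕ) : xi (k + 1) ≤ (2 * k + 2).choose k := by
  induction k with
  | zero => simp [xi]
  | succ k ih =>
    calc xi (k + 2) = xi (k + 1) + (2 * k + 3).choose (k + 1) := xi_succ (k + 1)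
      _ ≤ (2 * k + 3).choose k + (2 * k + 3).choose (k + 1) := by
        gcongr
        exact ih.trans (Nat.choose_le_succ _ _)
      _ = (2 * k + 4).choose (k + 1) := (Nat.choose_succ_succ _ _).symm

theorem xi_succ_le_choose {k n : ℕ} (h : 2 * k + 2 ≤ n) : xi (k + 1) ≤ n.choose k :=
  (xi_succ_le_choose_two_mul_add_two k).trans (Nat.choose_le_choose k h)

theorem choose_le_xi_succ {k n : ℕ} (h : n ≤ 2 * k + 1) : n.choose k ≤ xi (k + 1) :=
  calc n.choose k ≤ (2 * k + 1).choose k := Nat.choose_le_choose k h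
    _ ≤ xi k + (2 * k + 1).choose k := Nat.le_add_left _ _
    _ = xi (k + 1) := (xi_succ k).symm

/-- With `ξ_δ = ∑_{j=1}^δ C(2j-1, j)`, for `1 ≤ δ < n`:
`min(ξ_δ, C(n, δ-1))` equals `ξ_δ` if `n ≥ 2δ` and equals `C(n, δ-1)` if `n ≤ 2δ-1`. -/
theorem stmt_1 (δ n : ℕ) (hδ : 1 ≤ δ) (hn : δ < n) :
    (2 * δ ≤ n →
      min (∑ j ∈ Finset.Icc 1 δ, Nat.choose (2 * j - 1) j) (Nat.choose n (δ - 1)) =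
        ∑ j ∈ Finset.Icc 1 δ, Nat.choose (2 * j - 1) j) ∧
    (n ≤ 2 * δ - 1 →
      min (∑ j ∈ Finset.Icc 1 δ, Nat.choose (2 * j - 1) j) (Nat.choose n (δ - 1)) =
        Nat.choose n (δ - 1)) := by
  obtain ⟨k, rfl⟩ : ∃ k, δ = k + 1 := Nat.exists_eq_add_of_le' hδ
  rw [← xi, Nat.add_sub_cancel]
  exact ⟨fun h => min_eq_left (xi_succ_le_choose h), fun h => min_eq_right (choose_le_xi_succ h)⟩
end

section
/- Let k and i be integers with k ≥ i ≥ 1, and let a_i, a_{i+1}, …, a_k be integers with a_k > a_{k-1} > ⋯ > a_i ≥ i. Set x = Σ_{j=i}^{k} C(a_j, j). If x ≤ ξ_k := Σ_{j=1}^{k} C(2j-1, j), then Σ_{j=i}^{k} C(a_j, j-1) ≥ x. -/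
/-!
Let `x = ∑ C(a_j, j)` be given in Macaulay form, let `∂ = ∑ C(a_j, j - 1)` and `n = a_k + 1`.
Then `x < C(n, k)`, so Macaulay sums are ordered by their leading entries, and the local LYM
inequality `k x ≤ (n - k + 1) ∂` holds. In `ξ_k` the entries are `2j - 1`, so `x ≤ ξ_k` forces
`a_k ≤ 2k - 1`. If `a_k ≤ 2k - 2`, the coefficient `n - k + 1` is at most `k` and the LYM inequality
gives `x ≤ ∂`. If `a_k = 2k - 1`, the leading terms of `x`, `∂` and `ξ_k` are all equal, since
`C(2k - 1, k) = C(2k - 1, k - 1)`; cancelling them reduces the claim to `k - 1`.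
-/

/-- The admissible entries `a_k > ⋯ > a_i ≥ i ≥ 1` of a `k`-th Macaulay representation. They are
stored as a function on `ℕ` whose values outside `[i, k]` are irrelevant. -/
structure IsMacaulaySeq (a : ℕ → ℕ) (i k : ℕ) : Prop where
  one_le : 1 ≤ i
  le : i ≤ k
  le_apply : i ≤ a i
  strictMonoOn : StrictMonoOn a (Set.Icc i k)

/-- The number `∑ j ∈ [i, k], C(a_j, j)` with Macaulay entries `a_i, …, a_k`. -/
def macaulaySum (a : ℕ → ℕ) (i k : ℕ) : ℕ :=
  ∑ j ∈ Finset.Icc i k, (a j).choose j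

/-- The shadow `∂_{k-1}` of `macaulaySum a i k`, computed from the entries `a_i, …, a_k`. The
truncated subtraction is harmless for `1 ≤ i`. -/
def macaulayShadow (a : ℕ → ℕ) (i k : ℕ) : ℕ :=
  ∑ j ∈ Finset.Icc i k, (a j).choose (j - 1)

section Recursion

variable (a : ℕ → ℕ) (i : ℕ)

lemma macaulaySum_self : macaulaySum a i i = (a i).choose i := by
  simp [macaulaySum]

lemma macaulayShadow_self : macaulayShadow a i i = (a i).choose (i - 1) := by
  simp [macaulayShadow]

variable {i} {k : ℕ}

lemma macaulaySum_succ (hik : i ≤ k + 1) :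
    macaulaySum a i (k + 1) = macaulaySum a i k + (a (k + 1)).choose (k + 1) :=
  Finset.sum_Icc_succ_top hik _

lemma macaulayShadow_succ (hik : i ≤ k + 1) :
    macaulayShadow a i (k + 1) = macaulayShadow a i k + (a (k + 1)).choose k :=
  Finset.sum_Icc_succ_top hik _

lemma choose_le_macaulaySum (hik : i ≤ k) : (a k).choose k ≤ macaulaySum a i k :=
  Finset.single_le_sum (f := fun j ↦ (a j).choose j) (fun _ _ ↦ Nat.zero_le _)
    (Finset.right_mem_Icc.2 hik)

end Recursion

lemma add_one_mul_choose_add_choose (n k : ℕ) :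
    (k + 1) * (n.choose k + n.choose (k + 1)) = (n + 1) * n.choose k := by
  rw [← Nat.choose_succ_succ', Nat.add_one_mul_choose_eq, mul_comm]

namespace IsMacaulaySeq

variable {a b : ℕ → ℕ} {i i' k : ℕ}

lemma of_succ (ha : IsMacaulaySeq a i (k + 1)) (hik : i ≤ k) : IsMacaulaySeq a i k :=
  ⟨ha.one_le, hik, ha.le_apply, ha.strictMonoOn.mono (Set.Icc_subset_Icc_right k.le_succ)⟩

lemma apply_lt_apply_succ (ha : IsMacaulaySeq a i (k + 1)) (hik : i ≤ k) : a k < a (k + 1) :=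
  ha.strictMonoOn ⟨hik, k.le_succ⟩ ⟨ha.le, le_rfl⟩ k.lt_succ_self

lemma macaulaySum_lt_choose (ha : IsMacaulaySeq a i k) :
    macaulaySum a i k < (a k + 1).choose k := by
  have hik := ha.le
  induction k, hik using Nat.le_induction with
  | base =>
    obtain ⟨m, rfl⟩ := Nat.exists_eq_add_of_le' ha.one_le
    have hpos : 0 < (a (m + 1)).choose m := Nat.choose_pos (m.le_succ.trans ha.le_apply)
    rw [macaulaySum_self, Nat.choose_succ_succ']
    exact Nat.lt_add_of_pos_left hpos
  | succ k hik ih =>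
    calc macaulaySum a i (k + 1)
        = macaulaySum a i k + (a (k + 1)).choose (k + 1) := macaulaySum_succ a ha.le
      _ < (a k + 1).choose k + (a (k + 1)).choose (k + 1) :=
          Nat.add_lt_add_right (ih (ha.of_succ hik)) _
      _ ≤ (a (k + 1)).choose k + (a (k + 1)).choose (k + 1) :=
          Nat.add_le_add_right (Nat.choose_le_choose k (ha.apply_lt_apply_succ hik)) _
      _ = (a (k + 1) + 1).choose (k + 1) := (Nat.choose_succ_succ' _ _).symm

lemma apply_le_of_macaulaySum_le (hb : IsMacaulaySeq b i' k) (hik : i ≤ k)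
    (hab : macaulaySum a i k ≤ macaulaySum b i' k) : a k ≤ b k := by
  have hchoose : (a k).choose k < (b k + 1).choose k :=
    ((choose_le_macaulaySum a hik).trans hab).trans_lt hb.macaulaySum_lt_choose
  by_contra! hlt
  exact hchoose.not_ge (Nat.choose_le_choose k hlt)

/-- The local LYM inequality `k x ≤ (a_k + 2 - k) ∂`, freed of subtraction. -/
lemma mul_macaulaySum_add_macaulayShadow_le (ha : IsMacaulaySeq a i k) :
    k * (macaulaySum a i k + macaulayShadow a i k) ≤ (a k + 2) * macaulayShadow a i k := by
  have hik := ha.le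
  induction k, hik using Nat.le_induction with
  | base =>
    obtain ⟨m, rfl⟩ := Nat.exists_eq_add_of_le' ha.one_le
    rw [macaulaySum_self, macaulayShadow_self, Nat.add_sub_cancel, add_comm (Nat.choose _ _),
      add_one_mul_choose_add_choose]
    exact Nat.mul_le_mul_right _ (Nat.le_succ _)
  | succ k hik ih =>
    have hlt : a k < a (k + 1) := ha.apply_lt_apply_succ hik
    have hsum : macaulaySum a i k ≤ (a (k + 1)).choose k :=
      (ha.of_succ hik).macaulaySum_lt_choose.le.trans (Nat.choose_le_choose k hlt)
    have hlower : k * (macaulaySum a i k + macaulayShadow a i k) ≤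
        (a (k + 1) + 1) * macaulayShadow a i k :=
      (ih (ha.of_succ hik)).trans (Nat.mul_le_mul_right _ (Nat.succ_le_succ hlt))
    have htop := add_one_mul_choose_add_choose (a (k + 1)) k
    rw [macaulaySum_succ a ha.le, macaulayShadow_succ a ha.le]
    linarith

lemma macaulaySum_le_macaulayShadow_of_apply_add_two_le (ha : IsMacaulaySeq a i k)
    (htop : a k + 2 ≤ 2 * k) : macaulaySum a i k ≤ macaulayShadow a i k := by
  have hk : 0 < k := ha.one_le.trans ha.le
  have hmul : k * (macaulaySum a i k + macaulayShadow a i k) ≤ k * (2 * macaulayShadow a i k) :=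
    calc k * (macaulaySum a i k + macaulayShadow a i k)
        ≤ (a k + 2) * macaulayShadow a i k := ha.mul_macaulaySum_add_macaulayShadow_le
      _ ≤ 2 * k * macaulayShadow a i k := Nat.mul_le_mul_right _ htop
      _ = k * (2 * macaulayShadow a i k) := by ring
  have := Nat.le_of_mul_le_mul_left hmul hk
  omega

lemma two_mul_sub_one (hk : 1 ≤ k) : IsMacaulaySeq (fun j ↦ 2 * j - 1) 1 k where
  one_le := le_rfl
  le := hk
  le_apply := le_rfl
  strictMonoOn := by
    intro j hj j' _ hlt
    have := hj.1
    dsimp only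
    omega

lemma apply_add_two_le_or_eq_of_macaulaySum_le (ha : IsMacaulaySeq a i k)
    (hx : macaulaySum a i k ≤ macaulaySum (fun j ↦ 2 * j - 1) 1 k) :
    a k + 2 ≤ 2 * k ∨ a k = 2 * k - 1 := by
  have hk : 1 ≤ k := ha.one_le.trans ha.le
  have := (two_mul_sub_one hk).apply_le_of_macaulaySum_le ha.le hx
  omega

end IsMacaulaySeq

/-- Key lemma: if `x = ∑_{j=i}^k C(a_j, j)` is a Macaulay-type sum with
`a_k > ⋯ > a_i ≥ i ≥ 1` and `x ≤ ξ_k = ∑_{j=1}^k C(2j-1, j)`, then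
`∑_{j=i}^k C(a_j, j-1) ≥ x`. -/
theorem stmt_2 (k i : ℕ) (hi : 1 ≤ i) (hik : i ≤ k) (a : ℕ → ℕ)
    (hmono : ∀ j ∈ Finset.Icc i k, ∀ j' ∈ Finset.Icc i k, j < j' → a j < a j')
    (hai : i ≤ a i)
    (hx : (∑ j ∈ Finset.Icc i k, Nat.choose (a j) j) ≤
      ∑ j ∈ Finset.Icc 1 k, Nat.choose (2 * j - 1) j) :
    (∑ j ∈ Finset.Icc i k, Nat.choose (a j) j) ≤
      ∑ j ∈ Finset.Icc i k, Nat.choose (a j) (j - 1) := by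
  have ha : IsMacaulaySeq a i k := ⟨hi, hik, hai, by simpa [StrictMonoOn] using hmono⟩
  clear hmono
  change macaulaySum a i k ≤ macaulaySum (fun j ↦ 2 * j - 1) 1 k at hx
  change macaulaySum a i k ≤ macaulayShadow a i k
  induction k, hik using Nat.le_induction with
  | base =>
    obtain hlt | heq := ha.apply_add_two_le_or_eq_of_macaulaySum_le hx
    · exact ha.macaulaySum_le_macaulayShadow_of_apply_add_two_le hlt
    · rw [macaulaySum_self, macaulayShadow_self, heq]
      exact (Nat.choose_symm_of_eq_add (by omega)).le
  | succ k hik ih =>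
    obtain hlt | heq := ha.apply_add_two_le_or_eq_of_macaulaySum_le hx
    · exact ha.macaulaySum_le_macaulayShadow_of_apply_add_two_le hlt
    · rw [macaulaySum_succ a ha.le, macaulaySum_succ _ (by omega), heq] at hx
      have hrec := ih (ha.of_succ hik) (Nat.le_of_add_le_add_right hx)
      rw [macaulaySum_succ a ha.le, macaulayShadow_succ a ha.le, heq]
      exact Nat.add_le_add hrec (Nat.choose_symm_of_eq_add (by omega)).le
end

section
/- Let δ ≥ 1 and n ≥ 2δ. Then there exists a family 𝒜 of exactly ξ_δ + 1 distinct δ-element subsets of [n] = {1,…,n} whose shadow satisfies |∂𝒜| = ξ_δ; in particular |∂𝒜| < |𝒜|, so 𝒜 is not uniformly collapsible. -/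
/-- A family `𝒜` of `k`-element finite sets is uniformly collapsible if there is an
injective map `f` on `𝒜` with `f F` a `(k-1)`-element subset of `F` for each `F ∈ 𝒜`. -/
def UniformlyCollapsible {α : Type*} [DecidableEq α] (k : ℕ) (𝒜 : Finset (Finset α)) : Prop :=
  ∃ f : Finset α → Finset α, Set.InjOn f ↑𝒜 ∧ ∀ F ∈ 𝒜, f F ⊆ F ∧ (f F).card = k - 1

/-!
A collapsing map injects a uniform family into its shadow, so a family larger than its shadow is
not uniformly collapsible. For `1 ≤ m_1 < ⋯ < m_k`, take the first `1 + ∑ C(m_j, j)` of the `k`-sets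
in colexicographic order: all `k`-subsets of the first `m_k` points, followed by the sets `s ∪ {a}`,
where `a` is the next point and `s` runs over the analogous family of `(k-1)`-sets for
`m_1 < ⋯ < m_{k-1}`. Taking the shadow preserves this shape and lowers every uniformity by one, so
each summand `C(m_j, j)` becomes `C(m_j, j-1)`, while the extra `1`, which counts `∅` at the bottom
of the recursion, disappears. For `m_j = 2j - 1` the two sums agree.
-/

open Finset
open scoped FinsetFamily

section

variable {α : Type*} [DecidableEq α] {𝒜 : Finset (Finset α)} {G V : Finset α} {a : α} {k : ℕ}

theorem UniformlyCollapsible.card_le_card_shadow (h : UniformlyCollapsible k 𝒜) (hk : 1 ≤ k)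
    (h𝒜 : (𝒜 : Set (Finset α)).Sized k) : #𝒜 ≤ #(∂ 𝒜) := by
  obtain ⟨f, hinj, hf⟩ := h
  refine card_le_card_of_injOn f (fun F hF => ?_) hinj
  obtain ⟨hsub, hcard⟩ := hf F hF
  have hcard_succ : #F = #(f F) + 1 := by rw [h𝒜 hF, hcard, Nat.sub_add_cancel hk]
  exact mem_shadow_iff_exists_mem_card_add_one.2 ⟨F, hF, hsub, hcard_succ⟩

theorem shadow_union (𝒜 ℬ : Finset (Finset α)) : ∂ (𝒜 ∪ ℬ) = ∂ 𝒜 ∪ ∂ ℬ :=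
  sup_union

theorem shadow_powersetCard_succ (hk : k < #G) :
    ∂ (powersetCard (k + 1) G) = powersetCard k G := by
  ext t
  simp only [mem_shadow_iff_exists_mem_card_add_one, mem_powersetCard]
  constructor
  · rintro ⟨s, ⟨hsG, hs⟩, hts, hst⟩
    exact ⟨hts.trans hsG, by omega⟩
  · rintro ⟨htG, rfl⟩
    obtain ⟨s, hts, hsG, hs⟩ := exists_subsuperset_card_eq htG (Nat.le_succ _) hk
    exact ⟨s, ⟨hsG, hs⟩, hts, hs⟩

theorem shadow_image_insert (ha : ∀ s ∈ 𝒜, a ∉ s) :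
    ∂ (𝒜.image (insert a)) = 𝒜 ∪ (∂ 𝒜).image (insert a) := by
  ext t
  rw [mem_union]
  constructor
  · intro ht
    obtain ⟨_, hs', x, hx, rfl⟩ := mem_shadow_iff.1 ht
    obtain ⟨s, hs, rfl⟩ := mem_image.1 hs'
    obtain rfl | hxs := mem_insert.1 hx
    · exact .inl (by rwa [erase_insert (ha s hs)])
    · have hax : a ≠ x := (ne_of_mem_of_not_mem hxs (ha s hs)).symm
      rw [erase_insert_of_ne hax]
      exact .inr (mem_image_of_mem _ (erase_mem_shadow hs hxs))
  · rintro (ht | ht)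
    · exact mem_shadow_iff_insert_mem.2 ⟨a, ha t ht, mem_image_of_mem _ ht⟩
    · obtain ⟨_, ht', rfl⟩ := mem_image.1 ht
      obtain ⟨s, hs, x, hxs, rfl⟩ := mem_shadow_iff.1 ht'
      have hax : a ≠ x := (ne_of_mem_of_not_mem hxs (ha s hs)).symm
      rw [← erase_insert_of_ne hax]
      exact erase_mem_shadow (mem_image_of_mem _ hs) (mem_insert_of_mem hxs)

/-- One step of the recursion for initial segments of the colexicographic order: if `𝒜` is an
initial segment of the `(k - 1)`-subsets of `G` and `a` is the first point after `G`, then this is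
the initial segment of the `k`-sets whose last members are the sets `insert a s` for `s ∈ 𝒜`. The
order itself is not recorded: it enters only through the choice of `G` and `a`. -/
def colexExtend (k : ℕ) (G : Finset α) (a : α) (𝒜 : Finset (Finset α)) : Finset (Finset α) :=
  powersetCard k G ∪ 𝒜.image (insert a)

theorem colexExtend_subset_powersetCard (ha : a ∉ G) (h𝒜 : 𝒜 ⊆ powersetCard k G) :
    colexExtend (k + 1) G a 𝒜 ⊆ powersetCard (k + 1) (insert a G) := by
  rw [powersetCard_succ_insert ha]
  exact union_subset_union_right (image_subset_image h𝒜)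

theorem card_colexExtend (ha : a ∉ G) (h𝒜 : ∀ s ∈ 𝒜, s ⊆ G) :
    #(colexExtend k G a 𝒜) = (#G).choose k + #𝒜 := by
  have hinj : Set.InjOn (insert a) (𝒜 : Set (Finset α)) :=
    insert_erase_invOn.2.injOn.mono fun s hs => notMem_mono (h𝒜 s hs) ha
  have hdisj : Disjoint (powersetCard k G) (𝒜.image (insert a)) := by
    simp only [disjoint_left, mem_powersetCard, mem_image]
    rintro _ ⟨hG, -⟩ ⟨s, -, rfl⟩
    exact ha (hG (mem_insert_self a s))
  rw [colexExtend, card_union_of_disjoint hdisj, card_powersetCard, card_image_of_injOn hinj]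

theorem shadow_colexExtend (hk : k < #G) (ha : a ∉ G) (h𝒜 : 𝒜 ⊆ powersetCard k G) :
    ∂ (colexExtend (k + 1) G a 𝒜) = colexExtend k G a (∂ 𝒜) := by
  have ha𝒜 : ∀ s ∈ 𝒜, a ∉ s := fun s hs => notMem_mono (mem_powersetCard.1 (h𝒜 hs)).1 ha
  rw [colexExtend, shadow_union, shadow_powersetCard_succ hk, shadow_image_insert ha𝒜,
    ← union_assoc, union_eq_left.2 h𝒜, colexExtend]

theorem exists_subset_powersetCard_card_shadow_eq_sum_choose {m : ℕ → ℕ} (hm : StrictMono m)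
    (hV : m k < #V) :
    ∃ 𝒜 ⊆ powersetCard k V, #𝒜 = ∑ j ∈ Icc 1 k, (m j).choose j + 1 ∧
      #(∂ 𝒜) = ∑ j ∈ Icc 1 k, (m j).choose (j - 1) := by
  induction k generalizing V with
  | zero => exact ⟨{∅}, by simp, by simp, by simp⟩
  | succ k ih =>
    obtain ⟨W, hWV, hW⟩ := exists_subset_card_eq (Nat.succ_le_of_lt hV)
    obtain ⟨a, G, ha, rfl, hG⟩ := card_eq_succ.1 hW
    obtain ⟨𝒜, h𝒜, hcard, hshadow⟩ := ih (hG ▸ hm k.lt_succ_self)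
    have h𝒜G : ∀ s ∈ 𝒜, s ⊆ G := fun s hs => (mem_powersetCard.1 (h𝒜 hs)).1
    have hshadowG : ∀ t ∈ ∂ 𝒜, t ⊆ G := fun t ht =>
      let ⟨s, hs, hts⟩ := exists_subset_of_mem_shadow ht
      hts.trans (h𝒜G s hs)
    have hk : k < #G := hG ▸ hm.le_apply
    refine ⟨colexExtend (k + 1) G a 𝒜,
      (colexExtend_subset_powersetCard ha h𝒜).trans (powersetCard_mono hWV), ?_, ?_⟩
    · rw [card_colexExtend ha h𝒜G, hG, hcard, sum_Icc_succ_top k.succ_pos]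
      ring
    · rw [shadow_colexExtend hk ha h𝒜, card_colexExtend ha hshadowG, hG, hshadow,
        sum_Icc_succ_top k.succ_pos, Nat.add_sub_cancel, add_comm]

theorem stmt_7_general {δ : ℕ} (hδ : 1 ≤ δ) (hV : 2 * δ ≤ #V) :
    ∃ 𝒜 ⊆ powersetCard δ V, #𝒜 = ∑ j ∈ Icc 1 δ, (2 * j - 1).choose j + 1 ∧
      #(∂ 𝒜) = ∑ j ∈ Icc 1 δ, (2 * j - 1).choose j ∧ #(∂ 𝒜) < #𝒜 ∧
      ¬ UniformlyCollapsible δ 𝒜 := by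
  -- Truncated subtraction gives `2 * 0 - 1 = 0`, so the sequence is `0, 1, 3, 5, …`.
  have hm : StrictMono fun j : ℕ => 2 * j - 1 := fun i j hij => by dsimp only; omega
  obtain ⟨𝒜, h𝒜, hcard, hshadow⟩ :=
    exists_subset_powersetCard_card_shadow_eq_sum_choose (k := δ) (V := V) hm (by omega)
  have hsum : ∑ j ∈ Icc 1 δ, (2 * j - 1).choose (j - 1) = ∑ j ∈ Icc 1 δ, (2 * j - 1).choose j :=
    sum_congr rfl fun j hj => Nat.choose_symm_of_eq_add (by have := mem_Icc.1 hj; omega)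
  have hlt : #(∂ 𝒜) < #𝒜 := by omega
  have hsized : (𝒜 : Set (Finset α)).Sized δ := fun s hs => (mem_powersetCard.1 (h𝒜 hs)).2
  exact ⟨𝒜, h𝒜, hcard, hshadow.trans hsum, hlt,
    fun h => hlt.not_ge (h.card_le_card_shadow hδ hsized)⟩

end

/-- For `δ ≥ 1` and `n ≥ 2δ`, there is a family `𝒜` of `ξ_δ + 1` distinct `δ`-element
subsets of `[n]` with `|∂𝒜| = ξ_δ < |𝒜|`; in particular `𝒜` is not uniformly collapsible. -/
theorem stmt_7 (δ n : ℕ) (hδ : 1 ≤ δ) (hn : 2 * δ ≤ n) :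
    ∃ 𝒜 : Finset (Finset (Fin n)), (∀ s ∈ 𝒜, s.card = δ) ∧
      𝒜.card = (∑ j ∈ Finset.Icc 1 δ, Nat.choose (2 * j - 1) j) + 1 ∧
      𝒜.shadow.card = ∑ j ∈ Finset.Icc 1 δ, Nat.choose (2 * j - 1) j ∧
      𝒜.shadow.card < 𝒜.card ∧
      ¬ UniformlyCollapsible δ 𝒜 := by
  obtain ⟨𝒜, h𝒜, h⟩ := stmt_7_general (V := univ) hδ (hn.trans_eq (card_fin n).symm)
  exact ⟨𝒜, fun s hs => mem_powersetCard_univ.1 (h𝒜 hs), h⟩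
end

section
/- Let n ≥ 4 and let E be the family of 2-element subsets of [n] = {1,…,n} given by E = {{i, i+1} : 1 ≤ i ≤ n-1} ∪ {{1, n}} ∪ {{1, 3}} (an n-cycle together with the chord {1,3}). Then |E| = n+1, E is not uniformly collapsible, and every proper subfamily E' ⊊ E is uniformly collapsible. -/
section UniformlyCollapsible

variable {α : Type*} [DecidableEq α] {k : ℕ} {𝒜 ℬ : Finset (Finset α)}

lemma UniformlyCollapsible.mono (h : UniformlyCollapsible k ℬ) (hsub : 𝒜 ⊆ ℬ) :
    UniformlyCollapsible k 𝒜 := by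
  obtain ⟨f, hinj, hf⟩ := h
  exact ⟨f, hinj.mono (Finset.coe_subset.2 hsub), fun F hF => hf F (hsub hF)⟩

lemma UniformlyCollapsible.card_le_choose (h : UniformlyCollapsible k 𝒜) {V : Finset α}
    (hV : ∀ F ∈ 𝒜, F ⊆ V) : 𝒜.card ≤ V.card.choose (k - 1) := by
  obtain ⟨f, hinj, hf⟩ := h
  have hmaps : Set.MapsTo f 𝒜 (V.powersetCard (k - 1)) := fun F hF =>
    Finset.mem_powersetCard.2 ⟨(hf F hF).1.trans (hV F hF), (hf F hF).2⟩
  simpa only [Finset.card_powersetCard] using Finset.card_le_card_of_injOn f hmaps hinj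

lemma uniformlyCollapsible_two_image_of_injOn {ι : Type*} {s : Finset ι} {e : ι → Finset α}
    {r : ι → α} (hr : Set.InjOn r s) (hmem : ∀ i ∈ s, r i ∈ e i) :
    UniformlyCollapsible 2 (s.image e) := by
  have hchoice : ∀ F ∈ s.image e, ∃ T : Finset α, ∃ i ∈ s, e i = F ∧ T = {r i} := by
    intro F hF
    obtain ⟨i, hi, hiF⟩ := Finset.mem_image.1 hF
    exact ⟨{r i}, i, hi, hiF, rfl⟩
  choose! f hf using hchoice
  refine ⟨f, fun F hF G hG h => ?_, fun F hF => ?_⟩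
  · obtain ⟨i, hi, rfl, hfi⟩ := hf F hF
    obtain ⟨k, hk, rfl, hfk⟩ := hf G hG
    rw [hfi, hfk, Finset.singleton_inj] at h
    rw [hr hi hk h]
  · obtain ⟨i, hi, rfl, hfi⟩ := hf F hF
    rw [hfi, Finset.singleton_subset_iff]
    exact ⟨hmem i hi, Finset.card_singleton (r i)⟩

end UniformlyCollapsible

/-- The edge family of the cycle `1, 2, …, n, 1` together with the chord `{1, m}`. -/
def cycleWithChord (n m : ℕ) : Finset (Finset ℕ) :=
  ((Finset.Icc 1 (n - 1)).image fun i => {i, i + 1}) ∪ {{1, n}, {1, m}}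

namespace cycleWithChord

/-- An enumeration of `cycleWithChord n m` by `0, …, n`: the chord has index `0`, the edge `{1, n}`
has index `n`, and `{i, i + 1}` has index `i`. -/
def edge (n m i : ℕ) : Finset ℕ :=
  if i = 0 then {1, m} else if i = n then {1, n} else {i, i + 1}

/-- The endpoint chosen by edge `i` once edge `j` is deleted: its head when the remaining cycle is
oriented cyclically and the other edges point away from it. That cycle is `1, m, m + 1, …, n` if
`0 < j < m`, it is `1, 2, …, m` if `m ≤ j`, and it is the whole `n`-cycle if `j = 0`. -/
def head (m j i : ℕ) : ℕ :=
  if i = 0 ∧ m ≤ j then m else if i < j ∧ (j < m ∨ m ≤ i) then i + 1 else i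

variable {n m i j : ℕ}

lemma eq_image_edge (hn : 0 < n) :
    cycleWithChord n m = (Finset.range (n + 1)).image (edge n m) := by
  have hrange : Finset.range (n + 1) = Finset.Icc 1 (n - 1) ∪ {n, 0} := by
    ext i
    simp only [Finset.mem_range, Finset.mem_union, Finset.mem_Icc, Finset.mem_insert,
      Finset.mem_singleton]
    omega
  have hpath : (Finset.Icc 1 (n - 1)).image (edge n m) =
      (Finset.Icc 1 (n - 1)).image fun i => {i, i + 1} := by
    refine Finset.image_congr fun i hi => ?_
    rw [Finset.mem_coe, Finset.mem_Icc] at hi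
    rw [edge, if_neg (by omega), if_neg (by omega)]
  have hclosing : edge n m n = {1, n} := by rw [edge, if_neg hn.ne', if_pos rfl]
  have hchord : edge n m 0 = {1, m} := if_pos rfl
  rw [hrange, Finset.image_union, hpath, Finset.image_insert, Finset.image_singleton, hclosing,
    hchord, cycleWithChord]

lemma edge_injective (hm : 3 ≤ m) (hmn : m < n) : Function.Injective (edge n m) := by
  intro i k h
  unfold edge at h
  split_ifs at h <;> rw [← Finset.coe_inj] at h <;>
    simp only [Finset.coe_pair, Set.pair_eq_pair_iff] at h <;> omega

lemma card_eq (hm : 3 ≤ m) (hmn : m < n) : (cycleWithChord n m).card = n + 1 := by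
  rw [eq_image_edge (by omega), Finset.card_image_of_injective _ (edge_injective hm hmn),
    Finset.card_range]

lemma subset_Icc_of_mem (hm : 0 < m) (hmn : m ≤ n) {F : Finset ℕ} (hF : F ∈ cycleWithChord n m) :
    F ⊆ Finset.Icc 1 n := by
  simp only [cycleWithChord, Finset.mem_union, Finset.mem_image, Finset.mem_Icc, Finset.mem_insert,
    Finset.mem_singleton] at hF
  rcases hF with ⟨i, hi, rfl⟩ | rfl | rfl <;>
    simp only [Finset.insert_subset_iff, Finset.singleton_subset_iff, Finset.mem_Icc] <;> omega

lemma head_mem_edge (hi : i ≤ n) (hj : j ≤ n) (hij : i ≠ j) : head m j i ∈ edge n m i := by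
  unfold head edge
  split_ifs <;> rw [Finset.mem_insert, Finset.mem_singleton] <;> omega

lemma injOn_head (m j : ℕ) : Set.InjOn (head m j) {j}ᶜ := by
  intro i hi k hk h
  rw [Set.mem_compl_singleton_iff] at hi hk
  unfold head at h
  split_ifs at h <;> omega

lemma not_uniformlyCollapsible (hm : 3 ≤ m) (hmn : m < n) :
    ¬ UniformlyCollapsible 2 (cycleWithChord n m) := by
  intro h
  have hle := h.card_le_choose fun F hF => subset_Icc_of_mem (by omega) hmn.le hF
  rw [card_eq hm hmn, Nat.card_Icc, Nat.choose_one_right] at hle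
  omega

lemma uniformlyCollapsible_of_ssubset (hn : 0 < n) {E : Finset (Finset ℕ)}
    (hE : E ⊂ cycleWithChord n m) : UniformlyCollapsible 2 E := by
  obtain ⟨F, hF, hsub⟩ := Finset.ssubset_iff_exists_subset_erase.1 hE
  rw [eq_image_edge hn] at hF hsub
  obtain ⟨j, hj, rfl⟩ := Finset.mem_image.1 hF
  have hremaining : UniformlyCollapsible 2 (((Finset.range (n + 1)).erase j).image (edge n m)) := by
    refine uniformlyCollapsible_two_image_of_injOn (r := head m j)
      ((injOn_head m j).mono fun i hi => (Finset.mem_erase.1 hi).1) fun i hi => ?_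
    rw [Finset.mem_erase] at hi
    exact head_mem_edge (Finset.mem_range_succ_iff.1 hi.2) (Finset.mem_range_succ_iff.1 hj) hi.1
  exact hremaining.mono (hsub.trans (Finset.erase_image_subset_image_erase _ _ _))

end cycleWithChord

theorem stmt_9_general {n m : ℕ} (hm : 3 ≤ m) (hmn : m < n) :
    (cycleWithChord n m).card = n + 1 ∧ ¬ UniformlyCollapsible 2 (cycleWithChord n m) ∧
      ∀ E ⊂ cycleWithChord n m, UniformlyCollapsible 2 E :=
  ⟨cycleWithChord.card_eq hm hmn, cycleWithChord.not_uniformlyCollapsible hm hmn,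
    fun _ => cycleWithChord.uniformlyCollapsible_of_ssubset (by omega)⟩

/-- For `n ≥ 4`, the edge family of the `n`-cycle on `{1,…,n}` together with the chord
`{1,3}` has `n+1` members, is not uniformly collapsible, but every proper subfamily is. -/
theorem stmt_9 (n : ℕ) (hn : 4 ≤ n)
    (E : Finset (Finset ℕ))
    (hE : E = ((Finset.Icc 1 (n - 1)).image fun i => ({i, i + 1} : Finset ℕ)) ∪
      {({1, n} : Finset ℕ), ({1, 3} : Finset ℕ)}) :
    E.card = n + 1 ∧ ¬ UniformlyCollapsible 2 E ∧
      ∀ E' ⊂ E, UniformlyCollapsible 2 E' := by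
  subst hE
  exact stmt_9_general le_rfl hn
end

section
/- Let 1 ≤ d < n and let G be a family of distinct d-element subsets of [n] = {1,…,n}. Let P = G ∪ { B ⊆ [n] : |B| = d+1 and g ⊆ B for some g ∈ G }. Then the following are equivalent: (a) P can be written as a disjoint union of intervals [A, B] = {C ∈ P : A ⊆ C ⊆ B} with |B| = d+1 for every interval; (b) there exists an injective map φ from G into the (d+1)-element subsets of [n] with g ⊆ φ(g) for all g ∈ G; (c) the complement family { [n] \ g : g ∈ G }, a family of (n-d)-element subsets of [n], is uniformly collapsible. -/
section Poset

variable {α : Type*}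

/-- A set `I` of pairs partitions a set `P` into intervals: the pair `(a, b)` encodes the interval
`{c ∈ P | a ≤ c ≤ b}` of `P`, and every element of `P` lies in exactly one of these intervals. -/
structure IsIntervalPartition [Preorder α] (P : Set α) (I : Set (α × α)) : Prop where
  fst_mem : ∀ p ∈ I, p.1 ∈ P
  snd_mem : ∀ p ∈ I, p.2 ∈ P
  fst_le_snd : ∀ p ∈ I, p.1 ≤ p.2
  existsUnique_mem_Icc : ∀ c ∈ P, ∃! p, p ∈ I ∧ c ∈ Set.Icc p.1 p.2

theorem IsIntervalPartition.injOn_snd [Preorder α] {P : Set α} {I : Set (α × α)}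
    (hI : IsIntervalPartition P I) : Set.InjOn Prod.snd I := fun p hp q hq hpq =>
  (hI.existsUnique_mem_Icc p.2 (hI.snd_mem p hp)).unique
    ⟨hp, hI.fst_le_snd p hp, le_rfl⟩ ⟨hq, hpq ▸ hI.fst_le_snd q hq, hpq.le⟩

theorem exists_finset_isIntervalPartition_iff [Preorder α] [Finite α] (P : Set α) (q : α → Prop) :
    (∃ pairs : Finset (α × α),
      (∀ p ∈ pairs, p.1 ∈ P ∧ p.2 ∈ P ∧ p.1 ≤ p.2 ∧ q p.2) ∧
      (∀ c ∈ P, ∃! p, p ∈ pairs ∧ p.1 ≤ c ∧ c ≤ p.2)) ↔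
    ∃ I, IsIntervalPartition P I ∧ Set.MapsTo Prod.snd I {b ∈ P | q b} := by
  constructor
  · rintro ⟨pairs, hpairs, hunique⟩
    choose hfst hsnd hle hq using hpairs
    exact ⟨pairs, ⟨hfst, hsnd, hle, hunique⟩, fun p hp => ⟨hsnd p hp, hq p hp⟩⟩
  · rintro ⟨I, hI, hIq⟩
    lift I to Finset (α × α) using I.toFinite
    exact ⟨I, fun p hp => ⟨hI.fst_mem p hp, hI.snd_mem p hp, hI.fst_le_snd p hp, (hIq hp).2⟩,
      hI.existsUnique_mem_Icc⟩

theorem bijOn_piecewise_id {s t : Set α} {f : α → α} [∀ a, Decidable (a ∈ s)]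
    (hf : Set.InjOn f s) (hst : Set.MapsTo f s t) (hdisj : Disjoint s t) :
    Set.BijOn (s.piecewise f id) (s ∪ t \ f '' s) t := by
  have hf_on : Set.BijOn (s.piecewise f id) s (f '' s) :=
    hf.bijOn_image.congr (s.piecewise_eqOn f id).symm
  have hid_on : Set.BijOn (s.piecewise f id) (t \ f '' s) (t \ f '' s) :=
    (Set.bijOn_id _).congr fun a ha =>
      (s.piecewise_eqOn_compl f id (hdisj.symm.notMem_of_mem_left ha.1)).symm
  have himages : Disjoint (f '' s) (t \ f '' s) := Set.disjoint_sdiff_right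
  have hbij := hf_on.union hid_on <|
    (Set.injOn_union (hdisj.mono_right Set.sdiff_subset)).2 ⟨hf_on.injOn, hid_on.injOn,
      fun a ha b hb => himages.ne_of_mem (hf_on.mapsTo ha) (hid_on.mapsTo hb)⟩
  rwa [Set.union_sdiff_cancel hst.image_subset] at hbij

variable [PartialOrder α] {P G T : Set α}

theorem IsIntervalPartition.exists_injOn_of_minimal {I : Set (α × α)}
    (hI : IsIntervalPartition P I) (hG : ∀ g ∈ G, Minimal (· ∈ P) g)
    (hIT : Set.MapsTo Prod.snd I T) :
    ∃ φ : α → α, Set.InjOn φ G ∧ ∀ g ∈ G, g ≤ φ g ∧ φ g ∈ T := by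
  have exists_top : ∀ g ∈ G, ∃ b, (g, b) ∈ I ∧ g ≤ b := by
    intro g hg
    obtain ⟨⟨a, b⟩, ⟨hab, hag, hgb⟩, -⟩ := hI.existsUnique_mem_Icc g (hG g hg).prop
    obtain rfl : g = a := (hG g hg).eq_of_ge (hI.fst_mem _ hab) hag
    exact ⟨b, hab, hgb⟩
  choose! φ hφI hφ using exists_top
  refine ⟨φ, fun g hg g' hg' heq => ?_, fun g hg => ⟨hφ g hg, hIT (hφI g hg)⟩⟩
  exact congrArg Prod.fst (hI.injOn_snd (hφI g hg) (hφI g' hg') heq)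

theorem isIntervalPartition_graphOn {S : Set α} {r : α → α}
    (hG : ∀ g ∈ G, Minimal (· ∈ G ∪ T) g) (hT : ∀ t ∈ T, Maximal (· ∈ G ∪ T) t)
    (hGS : G ⊆ S) (hSP : S ⊆ G ∪ T) (hr : Set.BijOn r S T) (hle : ∀ b ∈ S, b ≤ r b) :
    IsIntervalPartition (G ∪ T) (S.graphOn r) where
  fst_mem := by
    rintro _ ⟨b, hb, rfl⟩
    exact hSP hb
  snd_mem := by
    rintro _ ⟨b, hb, rfl⟩
    exact Or.inr (hr.mapsTo hb)
  fst_le_snd := by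
    rintro _ ⟨b, hb, rfl⟩
    exact hle b hb
  existsUnique_mem_Icc := by
    rintro c (hc | hc)
    · refine ⟨(c, r c), ⟨⟨c, hGS hc, rfl⟩, le_rfl, hle c (hGS hc)⟩, ?_⟩
      rintro _ ⟨⟨b, hb, rfl⟩, hbc, -⟩
      rw [(hG c hc).eq_of_le (hSP hb) hbc]
    · obtain ⟨b, hb, rfl⟩ := hr.surjOn hc
      refine ⟨(b, r b), ⟨⟨b, hb, rfl⟩, hle b hb, le_rfl⟩, ?_⟩
      rintro _ ⟨⟨b', hb', rfl⟩, -, hb'c⟩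
      have hrb : r b = r b' := (hT _ hc).eq_of_le (Or.inr (hr.mapsTo hb')) hb'c
      rw [hr.injOn hb hb' hrb]

theorem exists_isIntervalPartition_union_iff
    (hG : ∀ g ∈ G, Minimal (· ∈ G ∪ T) g) (hT : ∀ t ∈ T, Maximal (· ∈ G ∪ T) t)
    (hGT : Disjoint G T) :
    (∃ I, IsIntervalPartition (G ∪ T) I ∧ Set.MapsTo Prod.snd I T) ↔
      ∃ φ : α → α, Set.InjOn φ G ∧ ∀ g ∈ G, g ≤ φ g ∧ φ g ∈ T := by
  classical
  refine ⟨fun ⟨I, hI, hIT⟩ => hI.exists_injOn_of_minimal hG hIT, ?_⟩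
  rintro ⟨φ, hφ, hφT⟩
  have hr := bijOn_piecewise_id hφ (fun g hg => (hφT g hg).2) hGT
  refine ⟨Set.graphOn (G.piecewise φ id) _, isIntervalPartition_graphOn hG hT Set.subset_union_left
    (Set.union_subset_union_right G Set.sdiff_subset) hr fun b _ => ?_, fun p hp => ?_⟩
  · by_cases hb : b ∈ G
    · rw [Set.piecewise_eq_of_mem _ _ _ hb]
      exact (hφT b hb).1
    · rw [Set.piecewise_eq_of_notMem _ _ _ hb, id]
  · obtain ⟨b, hb, rfl⟩ := hp
    exact hr.mapsTo hb

end Poset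

section SetFamily

open Finset
open scoped FinsetFamily

variable {α : Type*}

/-- The notion dual to uniform collapsibility: the members of `𝒜` can be enlarged injectively to
`k`-element sets. Here `k` is the size of the enlarged sets, not of the members of `𝒜`. -/
def UniformlyExpandable (k : ℕ) (𝒜 : Finset (Finset α)) : Prop :=
  ∃ φ : Finset α → Finset α, Set.InjOn φ ↑𝒜 ∧ ∀ F ∈ 𝒜, F ⊆ φ F ∧ #(φ F) = k

theorem minimal_mem_of_card_le {P : Set (Finset α)} {s : Finset α} (hs : s ∈ P)
    (hcard : ∀ t ∈ P, #s ≤ #t) : Minimal (· ∈ P) s :=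
  ⟨hs, fun t ht hts => (eq_of_subset_of_card_le hts (hcard t ht)).ge⟩

theorem maximal_mem_of_card_le {P : Set (Finset α)} {s : Finset α} (hs : s ∈ P)
    (hcard : ∀ t ∈ P, #t ≤ #s) : Maximal (· ∈ P) s :=
  ⟨hs, fun t ht hst => (eq_of_subset_of_card_le hst (hcard t ht)).ge⟩

variable [Fintype α] [DecidableEq α] {d : ℕ} {𝒜 : Finset (Finset α)}

theorem mem_upShadow_iff_of_sized (h𝒜 : (𝒜 : Set (Finset α)).Sized d) {B : Finset α} :
    B ∈ ∂⁺ 𝒜 ↔ #B = d + 1 ∧ ∃ A ∈ 𝒜, A ⊆ B := by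
  rw [mem_upShadow_iff_exists_mem_card_add_one]
  constructor
  · rintro ⟨A, hA, hAB, hcard⟩
    exact ⟨h𝒜 hA ▸ hcard, A, hA, hAB⟩
  · rintro ⟨hcard, A, hA, hAB⟩
    exact ⟨A, hA, hAB, (h𝒜 hA).symm ▸ hcard⟩

theorem sep_card_union_upShadow (h𝒜 : (𝒜 : Set (Finset α)).Sized d) :
    {B ∈ (𝒜 ∪ ∂⁺ 𝒜 : Set (Finset α)) | #B = d + 1} = ∂⁺ 𝒜 := by
  ext B
  constructor
  · rintro ⟨hB | hB, hcard⟩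
    · simp [h𝒜 hB] at hcard
    · exact hB
  · exact fun hB => ⟨Or.inr hB, h𝒜.upShadow hB⟩

theorem exists_isIntervalPartition_union_upShadow_iff (h𝒜 : (𝒜 : Set (Finset α)).Sized d) :
    (∃ I, IsIntervalPartition (𝒜 ∪ ∂⁺ 𝒜 : Set (Finset α)) I ∧ Set.MapsTo Prod.snd I ↑(∂⁺ 𝒜)) ↔
      UniformlyExpandable (d + 1) 𝒜 := by
  have hup : (∂⁺ 𝒜 : Set (Finset α)).Sized (d + 1) := h𝒜.upShadow
  have hcard : ∀ C ∈ (𝒜 ∪ ∂⁺ 𝒜 : Set (Finset α)), d ≤ #C ∧ #C ≤ d + 1 := by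
    rintro C (hC | hC)
    · simp [h𝒜 hC]
    · simp [hup hC]
  have hmin : ∀ A ∈ (𝒜 : Set (Finset α)), Minimal (· ∈ (𝒜 ∪ ∂⁺ 𝒜 : Set (Finset α))) A :=
    fun A hA => minimal_mem_of_card_le (Or.inl hA) fun C hC => h𝒜 hA ▸ (hcard C hC).1
  have hmax : ∀ B ∈ (∂⁺ 𝒜 : Set (Finset α)), Maximal (· ∈ (𝒜 ∪ ∂⁺ 𝒜 : Set (Finset α))) B :=
    fun B hB => maximal_mem_of_card_le (Or.inr hB) fun C hC => hup hB ▸ (hcard C hC).2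
  have hdisj : Disjoint (𝒜 : Set (Finset α)) (∂⁺ 𝒜) :=
    Set.disjoint_left.2 fun A hA hA' => by simpa [h𝒜 hA] using hup hA'
  rw [exists_isIntervalPartition_union_iff hmin hmax hdisj]
  refine exists_congr fun φ => and_congr_right fun _ => forall₂_congr fun A hA =>
    and_congr_right fun hle => ?_
  rw [mem_coe, mem_upShadow_iff_of_sized h𝒜]
  exact and_iff_left ⟨A, hA, hle⟩

theorem uniformlyCollapsible_compls_iff (hd : d < Fintype.card α) :
    UniformlyCollapsible (Fintype.card α - d) 𝒜ᶜˢ ↔ UniformlyExpandable (d + 1) 𝒜 := by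
  constructor
  · rintro ⟨f, hf, hfsub⟩
    refine ⟨fun A => (f Aᶜ)ᶜ, fun A hA B hB hAB => ?_, fun A hA => ?_⟩
    · exact compl_injective <|
        hf (compl_mem_compls hA) (compl_mem_compls hB) (compl_injective hAB)
    · obtain ⟨hsub, hcard⟩ := hfsub Aᶜ (compl_mem_compls hA)
      refine ⟨subset_compl_comm.1 hsub, ?_⟩
      rw [card_compl, hcard]
      omega
  · rintro ⟨φ, hφ, hsubφ⟩
    refine ⟨fun F => (φ Fᶜ)ᶜ, fun F hF F' hF' heq => ?_, forall_mem_compls.2 fun A hA => ?_⟩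
    · exact compl_injective <| hφ (mem_compls.1 hF) (mem_compls.1 hF') (compl_injective heq)
    · obtain ⟨hsub, hcard⟩ := hsubφ A hA
      simp only [compl_compl]
      rw [card_compl, hcard, Nat.sub_sub]
      exact ⟨compl_subset_compl.2 hsub, rfl⟩

end SetFamily

theorem stmt_12_general {α : Type*} [Fintype α] [DecidableEq α] (d : ℕ) (hd : d < Fintype.card α)
    (G : Finset (Finset α)) (hG : ∀ g ∈ G, g.card = d)
    (P : Finset (Finset α))
    (hP : P = G ∪ (Finset.univ.powersetCard (d + 1)).filter (fun B => ∃ g ∈ G, g ⊆ B)) :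
    List.TFAE [
      (∃ pairs : Finset (Finset α × Finset α),
        (∀ p ∈ pairs, p.1 ∈ P ∧ p.2 ∈ P ∧ p.1 ⊆ p.2 ∧ p.2.card = d + 1) ∧
        (∀ C ∈ P, ∃! p, p ∈ pairs ∧ p.1 ⊆ C ∧ C ⊆ p.2)),
      (∃ φ : Finset α → Finset α,
        Set.InjOn φ ↑G ∧ ∀ g ∈ G, g ⊆ φ g ∧ (φ g).card = d + 1),
      UniformlyCollapsible (Fintype.card α - d) (G.image fun g => gᶜ)] := by
  have hPup : (P : Set (Finset α)) = ↑G ∪ ↑G.upShadow := by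
    ext C
    simp [hP, mem_upShadow_iff_of_sized hG]
  tfae_have 1 ↔ 2 := by
    refine (exists_finset_isIntervalPartition_iff (P : Set (Finset α)) (·.card = d + 1)).trans ?_
    rw [hPup, sep_card_union_upShadow hG]
    exact exists_isIntervalPartition_union_upShadow_iff hG
  tfae_have 3 ↔ 2 := by
    rw [Finset.image_compl]
    exact uniformlyCollapsible_compls_iff hd
  tfae_finish

/-- For a family `G` of `d`-element subsets of `[n]` and the poset
`P = G ∪ {B : |B| = d+1, g ⊆ B for some g ∈ G}`, the following are equivalent:
(a) `P` is a disjoint union of intervals `[A, B]` with `|B| = d+1`;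
(b) there is an injective `φ : G → (d+1)`-subsets of `[n]` with `g ⊆ φ g`;
(c) the complement family `{[n] \ g : g ∈ G}` is uniformly collapsible. -/
theorem stmt_12 (n d : ℕ) (hd : 1 ≤ d) (hdn : d < n)
    (G : Finset (Finset (Fin n))) (hG : ∀ g ∈ G, g.card = d)
    (P : Finset (Finset (Fin n)))
    (hP : P = G ∪ (Finset.univ.powersetCard (d + 1)).filter (fun B => ∃ g ∈ G, g ⊆ B)) :
    List.TFAE [
      (∃ pairs : Finset (Finset (Fin n) × Finset (Fin n)),
        (∀ p ∈ pairs, p.1 ∈ P ∧ p.2 ∈ P ∧ p.1 ⊆ p.2 ∧ p.2.card = d + 1) ∧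
        (∀ C ∈ P, ∃! p, p ∈ pairs ∧ p.1 ⊆ C ∧ C ⊆ p.2)),
      (∃ φ : Finset (Fin n) → Finset (Fin n),
        Set.InjOn φ ↑G ∧ ∀ g ∈ G, g ⊆ φ g ∧ (φ g).card = d + 1),
      UniformlyCollapsible (n - d) (G.image fun g => gᶜ)] := by
  simpa only [Fintype.card_fin] using
    stmt_12_general d (hdn.trans_eq (Fintype.card_fin n).symm) G hG P hP
end
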